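/- Let n ≥ 2 and let w : Fin n → ℚ be a nontrivial weighting vector, i.e., w is not a rational multiple of the all-ones vector plus the zero adjustment (there is no β with w = β·𝟙). Then T_w is recoverable from the pairs map P — i.e., there exists a ℚ-linear map R : (Fin n × Fin n → ℚ) → (Fin n → ℚ) with T_w(p) = R(P(p)) for every profile p — if and only if there exist rationals α ≠ 0 and β with w = α·b + β·𝟙, where b(j) = n − 1 − j is the Borda weighting vector (equivalently, w or −w is equivalent to the Borda count). -/

import Mathlib

/-- The positional voting map `T_w` as a `ℚ`-linear map. -/
noncomputable def positionalMap (n : ℕ) (w : Fin n → ℚ) :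
    (Equiv.Perm (Fin n) → ℚ) →ₗ[ℚ] (Fin n → ℚ) where
  toFun p := fun c => ∑ σ : Equiv.Perm (Fin n), p σ * w (σ⁻¹ c)
  map_add' p q := by funext c; simp [add_mul, Finset.sum_add_distrib]
  map_smul' a p := by funext c; simp [Finset.mul_sum, mul_assoc]

/-- The pairs map `P` as a `ℚ`-linear map: `P(p)(c, d)` is the total weight of
ballots ranking `c` above `d` (and `P(p)(c, c) = 0`, since no ballot ranks `c`
strictly above itself). -/
noncomputable def pairsMap (n : ℕ) :
    (Equiv.Perm (Fin n) → ℚ) →ₗ[ℚ] (Fin n × Fin n → ℚ) where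
  toFun p := fun cd =>
    ∑ σ ∈ Finset.univ.filter (fun σ : Equiv.Perm (Fin n) => σ⁻¹ cd.1 < σ⁻¹ cd.2), p σ
  map_add' p q := by funext cd; simp [Finset.sum_add_distrib]
  map_smul' a p := by funext cd; simp [Finset.mul_sum]

theorem aux_pairs_single (n : ℕ) (σ : Equiv.Perm (Fin n)) :
    pairsMap n (Pi.single σ 1) = fun cd => if σ⁻¹ cd.1 < σ⁻¹ cd.2 then (1 : ℚ) else 0 := by
  funext cd
  simp [pairsMap, Finset.sum_filter, Pi.single_apply]
  rw [Finset.sum_eq_single σ]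
  · simp
  · intro b _ hb
    simp [hb]
  · simp

theorem aux_pos_single (n : ℕ) (w : Fin n → ℚ) (σ : Equiv.Perm (Fin n)) :
    positionalMap n w (Pi.single σ 1) = fun c => w (σ⁻¹ c) := by
  funext c
  simp [positionalMap, Pi.single_apply]

theorem aux_swap (n : ℕ) (a b u v : Fin n) (hab : (b : ℕ) = a + 1) :
    (if u < v then (1 : ℚ) else 0)
      - (if Equiv.swap a b u < Equiv.swap a b v then (1 : ℚ) else 0)
      = if u = a ∧ v = b then 1 else if u = b ∧ v = a then -1 else 0 := by
  simp only [Equiv.swap_apply_def, Fin.lt_def, Fin.ext_iff]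
  split_ifs <;> first | (exfalso; omega) | norm_num

theorem aux_diff (n : ℕ) (w : Fin n → ℚ) (R : (Fin n × Fin n → ℚ) →ₗ[ℚ] (Fin n → ℚ))
    (hR : positionalMap n w = R ∘ₗ pairsMap n) (z o : Fin n) (hzo : z ≠ o) (a b : Fin n)
    (hab : (b : ℕ) = a + 1) :
    w a - w b = R (fun cd => if cd.1 = z ∧ cd.2 = o then 1
      else if cd.1 = o ∧ cd.2 = z then -1 else 0) z := by
  have hne : a ≠ b := by intro h; rw [h] at hab; omega
  obtain ⟨π, hz, ho⟩ : ∃ π : Equiv.Perm (Fin n), π z = a ∧ π o = b := by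
    refine ⟨Equiv.swap (Equiv.swap z a o) b * Equiv.swap z a, ?_, ?_⟩
    · rw [Equiv.Perm.mul_apply, Equiv.swap_apply_left]
      apply Equiv.swap_apply_of_ne_of_ne _ hne
      intro h
      apply hzo
      apply (Equiv.swap z a).injective
      rw [Equiv.swap_apply_left]
      exact h
    · rw [Equiv.Perm.mul_apply, Equiv.swap_apply_left]
  have key : ∀ ρ : Equiv.Perm (Fin n),
      w (ρ z) = R (fun cd => if ρ cd.1 < ρ cd.2 then (1 : ℚ) else 0) z := by
    intro ρ
    have h := congrFun (LinearMap.congr_fun hR (Pi.single ρ⁻¹ 1)) z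
    rw [LinearMap.comp_apply, aux_pairs_single, aux_pos_single] at h
    simpa using h
  have h1 := key π
  have h2 := key (Equiv.swap a b * π)
  simp only [Equiv.Perm.mul_apply] at h2
  rw [hz] at h1
  rw [hz, Equiv.swap_apply_left] at h2
  rw [h1, h2, ← Pi.sub_apply, ← map_sub]
  refine congrArg (fun q => R q z) ?_
  funext cd
  rw [Pi.sub_apply]
  refine (aux_swap n a b (π cd.1) (π cd.2) hab).trans ?_
  simp only [← hz, ← ho, π.injective.eq_iff]

theorem aux_borda (n : ℕ) (π : Equiv.Perm (Fin n)) (c : Fin n) :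
    ∑ d, (if π c < π d then (1 : ℚ) else 0) = (n : ℚ) - 1 - ((π c : ℕ) : ℚ) := by
  rw [Equiv.sum_comp π (fun d => if π c < d then (1 : ℚ) else 0), Finset.sum_boole]
  have : (Finset.univ.filter fun d => π c < d) = Finset.Ioi (π c) := by ext; simp
  rw [this, Fin.card_Ioi]
  have := (π c).isLt
  rw [Nat.cast_sub (by omega), Nat.cast_sub (by omega)]
  simp

/-- For `n ≥ 2` and a nontrivial weighting vector `w` (not a
multiple of the all-ones vector), `T_w` is recoverable from the pairs map `P`
if and only if `w = α·b + β·𝟙` for some rationals `α ≠ 0`, `β`, where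
`b(j) = n − 1 − j` is the Borda weighting vector. -/
theorem recoverable_from_pairs_iff_borda (n : ℕ) (hn : 2 ≤ n)
    (w : Fin n → ℚ) (hw : ¬ ∃ β : ℚ, w = fun _ => β) :
    (∃ R : (Fin n × Fin n → ℚ) →ₗ[ℚ] (Fin n → ℚ),
        positionalMap n w = R ∘ₗ pairsMap n) ↔
      ∃ α β : ℚ, α ≠ 0 ∧ w = fun j : Fin n => α * ((n : ℚ) - 1 - ((j : ℕ) : ℚ)) + β := by
  have hz : 0 < n := by omega
  have ho : 1 < n := by omega
  have hzo : (⟨0, hz⟩ : Fin n) ≠ ⟨1, ho⟩ := by simp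
  constructor
  · rintro ⟨R, hR⟩
    have hd := aux_diff n w R hR ⟨0, hz⟩ ⟨1, ho⟩ hzo
    generalize R _ _ = δ at hd
    have hj : ∀ k (hk : k < n), w ⟨k, hk⟩ = w ⟨0, hz⟩ - k * δ := by
      intro k
      induction k with
      | zero => intro hk; simp
      | succ k ih =>
        intro hk
        have h1 := ih (by omega)
        have h2 := hd ⟨k, by omega⟩ ⟨k + 1, hk⟩ rfl
        push_cast
        linarith
    refine ⟨δ, w ⟨0, hz⟩ - δ * (n - 1), ?_, ?_⟩
    · rintro rfl
      exact hw ⟨w ⟨0, hz⟩, funext fun j => by simpa using hj j j.isLt⟩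
    · funext j
      rw [hj j j.isLt]
      ring
  · rintro ⟨α, β, -, rfl⟩
    refine ⟨LinearMap.pi fun c => α • (∑ d, LinearMap.proj (c, d)) +
      β • (LinearMap.proj (⟨0, hz⟩, ⟨1, ho⟩) + LinearMap.proj (⟨1, ho⟩, ⟨0, hz⟩)), ?_⟩
    apply LinearMap.pi_ext'
    intro σ
    apply LinearMap.ext_ring
    funext c
    simp only [LinearMap.comp_apply, LinearMap.single_apply, aux_pairs_single, aux_pos_single,
      LinearMap.pi_apply, LinearMap.add_apply, LinearMap.smul_apply, LinearMap.sum_apply,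
      LinearMap.proj_apply, smul_eq_mul, aux_borda]
    have hne : σ⁻¹ ⟨0, hz⟩ ≠ σ⁻¹ ⟨1, ho⟩ := fun h => hzo (σ⁻¹.injective h)
    rcases lt_or_gt_of_ne hne with h | h
    · rw [if_pos h, if_neg (not_lt.mpr h.le)]; ring
    · rw [if_neg (not_lt.mpr h.le), if_pos h]; ring
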